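/- Let L be a symmetric positive-definite n×n real matrix with smallest eigenvalue ℓ > 0, let z : ℝ → ℝᵏ be a continuous function satisfying ‖z(t)‖ ≤ c e^{−α t} + r for all t ≥ 0 with c ≥ 0, α > 0, r ≥ 0, let B : ℝ → (n×k real matrices) be continuous with operator norm ‖B(t)‖ ≤ b for all t, let w : ℝ → ℝⁿ be continuous with ‖w(t)‖ ≤ W for all t ≥ 0, and let y : ℝ → ℝⁿ be differentiable with y'(t) = −L y(t) + B(t) z(t) + w(t) for all t ≥ 0. Then y(t) is bounded on [0, ∞) and limsup_{t→∞} ‖y(t)‖ ≤ (b r + W)/ℓ; in particular y converges exponentially to a bounded set. -/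

import Mathlib

open Matrix Filter

/-! Along `y' = -A y + u` with `A` coercive of constant `ℓ`, Cauchy–Schwarz gives
`⟪y, y'⟫ ≤ ‖y‖ (‖u‖ - ℓ ‖y‖)`, formally `‖y‖' ≤ ‖u‖ - ℓ ‖y‖`. Since `‖y‖` need not be
differentiable where `y` vanishes, compare `‖y‖ ^ 2` with the square of a positive supersolution
of this scalar equation. When `‖u‖ ≤ p e^{-βt} + q` with `β < ℓ`, such a supersolution is
`(‖y 0‖ + p / (ℓ - β)) e^{-βt} + q / ℓ`, up to an arbitrarily small perturbation that keeps it
positive and strict.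
-/

section Coercivity

open scoped InnerProductSpace

theorem mul_norm_sq_le_re_inner_toEuclideanLin {𝕜 ι : Type*} [RCLike 𝕜] [Fintype ι]
    [DecidableEq ι] {A : Matrix ι ι 𝕜} (hA : A.IsHermitian) {m : ℝ}
    (hm : ∀ i, m ≤ hA.eigenvalues i) (x : EuclideanSpace 𝕜 ι) :
    m * ‖x‖ ^ 2 ≤ RCLike.re ⟪x, toEuclideanLin A x⟫_𝕜 := by
  let v := hA.eigenvectorBasis
  have hv (i : ι) : toEuclideanLin A (v i) = (hA.eigenvalues i : 𝕜) • v i := by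
    rw [toLpLin_apply, hA.mulVec_eigenvectorBasis, WithLp.toLp_smul, WithLp.toLp_ofLp,
      RCLike.real_smul_eq_coe_smul (K := 𝕜)]
  have hcoord (i : ι) : ⟪x, v i⟫_𝕜 * ⟪v i, toEuclideanLin A x⟫_𝕜 =
      ((hA.eigenvalues i * ‖⟪v i, x⟫_𝕜‖ ^ 2 : ℝ) : 𝕜) := by
    rw [← isSymmetric_toEuclideanLin_iff.2 hA, hv, inner_smul_left, RCLike.conj_ofReal,
      mul_left_comm, ← inner_conj_symm x (v i), RCLike.conj_mul]
    simp only [RCLike.ofReal_mul, RCLike.ofReal_pow]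
  calc m * ‖x‖ ^ 2 = ∑ i, m * ‖⟪v i, x⟫_𝕜‖ ^ 2 := by
        rw [← v.sum_sq_norm_inner_right x, Finset.mul_sum]
    _ ≤ ∑ i, hA.eigenvalues i * ‖⟪v i, x⟫_𝕜‖ ^ 2 := by
        gcongr with i
        exact hm i
    _ = RCLike.re ⟪x, toEuclideanLin A x⟫_𝕜 := by
        simp only [← v.sum_inner_mul_inner x (toEuclideanLin A x), hcoord, map_sum,
          RCLike.ofReal_re]

end Coercivity

section Comparison

open Set
open scoped RealInnerProductSpace

variable {E : Type*} [NormedAddCommGroup E] [InnerProductSpace ℝ E]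

theorem norm_le_of_inner_deriv_lt_of_norm_eq {y y' : ℝ → E} {φ φ' : ℝ → ℝ} {a : ℝ}
    (hy : ∀ t, a ≤ t → HasDerivWithinAt y (y' t) (Ici a) t)
    (hφ : ∀ t, a ≤ t → HasDerivWithinAt φ (φ' t) (Ici a) t)
    (hφ0 : ∀ t, a ≤ t → 0 ≤ φ t) (ha : ‖y a‖ ≤ φ a)
    (bound : ∀ t, a ≤ t → ‖y t‖ = φ t → ⟪y t, y' t⟫ < φ t * φ' t) {t : ℝ} (ht : a ≤ t) :
    ‖y t‖ ≤ φ t := by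
  have hy_sq (s : ℝ) (hs : a ≤ s) := (hy s hs).norm_sq
  have hφ_sq (s : ℝ) (hs : a ≤ s) := (hφ s hs).pow 2
  have hsq : ‖y t‖ ^ 2 ≤ φ t ^ 2 := by
    refine image_le_of_deriv_right_lt_deriv_boundary'
      (fun s hs => (hy_sq s hs.1).continuousWithinAt.mono Icc_subset_Ici_self)
      (fun s hs => (hy_sq s hs.1).mono (Ici_subset_Ici.2 hs.1))
      (pow_le_pow_left₀ (norm_nonneg _) ha 2)
      (fun s hs => (hφ_sq s hs.1).continuousWithinAt.mono Icc_subset_Ici_self)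
      (fun s hs => (hφ_sq s hs.1).mono (Ici_subset_Ici.2 hs.1))
      (fun s hs heq => ?_) (right_mem_Icc.2 ht)
    have hnorm : ‖y s‖ = φ s :=
      (pow_left_inj₀ (norm_nonneg _) (hφ0 s hs.1) two_ne_zero).1 heq
    simp only [Nat.cast_ofNat, Nat.add_one_sub_one, pow_one]
    linarith [bound s hs.1 hnorm]
  exact (pow_le_pow_iff_left₀ (norm_nonneg _) (hφ0 t ht) two_ne_zero).1 hsq

theorem norm_le_of_inner_deriv_le {y y' : ℝ → E} {g φ φ' : ℝ → ℝ} {a ℓ : ℝ}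
    (hy : ∀ t, a ≤ t → HasDerivWithinAt y (y' t) (Ici a) t)
    (hy' : ∀ t, a ≤ t → ⟪y t, y' t⟫ ≤ ‖y t‖ * (g t - ℓ * ‖y t‖))
    (hφ : ∀ t, a ≤ t → HasDerivWithinAt φ (φ' t) (Ici a) t)
    (hφ' : ∀ t, a ≤ t → g t - ℓ * φ t ≤ φ' t)
    (hφ0 : ∀ t, a ≤ t → 0 ≤ φ t) (ha : ‖y a‖ ≤ φ a) {t : ℝ} (ht : a ≤ t) :
    ‖y t‖ ≤ φ t := by
  refine le_of_forall_pos_le_add fun δ hδ => ?_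
  -- Any rate above `-ℓ` makes the perturbed supersolution strict.
  let η (s : ℝ) : ℝ := δ * Real.exp ((1 - ℓ) * (s - t))
  have hη0 (s : ℝ) : 0 < η s := by positivity
  have hη (s : ℝ) : HasDerivAt η ((1 - ℓ) * η s) s := by
    convert! ((((hasDerivAt_id s).sub_const t).const_mul (1 - ℓ)).exp).const_mul δ using 1
    simp only [η, id]
    ring
  have key : ‖y t‖ ≤ φ t + η t :=
    norm_le_of_inner_deriv_lt_of_norm_eq hy
      (fun s hs => (hφ s hs).add (hη s).hasDerivWithinAt)
      (fun s hs => add_nonneg (hφ0 s hs) (hη0 s).le)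
      (ha.trans (le_add_of_nonneg_right (hη0 a).le))
      (fun s hs (heq : ‖y s‖ = φ s + η s) => by
        refine (hy' s hs).trans_lt ?_
        rw [heq]
        refine mul_lt_mul_of_pos_left ?_ (add_pos_of_nonneg_of_pos (hφ0 s hs) (hη0 s))
        linarith [hφ' s hs, hη0 s]) ht
  simpa [η] using key

theorem norm_le_exp_add_div_of_inner_deriv_le {y y' : ℝ → E} {ℓ β p q : ℝ} (hℓ : 0 < ℓ)
    (hβ : β < ℓ) (hp : 0 ≤ p) (hq : 0 ≤ q)
    (hy : ∀ t, 0 ≤ t → HasDerivWithinAt y (y' t) (Ici 0) t)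
    (hy' : ∀ t, 0 ≤ t →
      ⟪y t, y' t⟫ ≤ ‖y t‖ * (p * Real.exp (-β * t) + q - ℓ * ‖y t‖)) {t : ℝ} (ht : 0 ≤ t) :
    ‖y t‖ ≤ (‖y 0‖ + p / (ℓ - β)) * Real.exp (-β * t) + q / ℓ := by
  have hgap : 0 < ℓ - β := sub_pos.2 hβ
  set K := ‖y 0‖ + p / (ℓ - β) with hK
  have hφ (s : ℝ) : HasDerivAt (fun s => K * Real.exp (-β * s) + q / ℓ)
      (K * (Real.exp (-β * s) * -β)) s := by
    simpa using ((((hasDerivAt_id s).const_mul (-β)).exp).const_mul K).add_const (q / ℓ)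
  refine norm_le_of_inner_deriv_le hy hy' (fun s _ => (hφ s).hasDerivWithinAt)
    (fun s _ => ?_) (fun s _ => by positivity) ?_ ht
  · have hgain : p ≤ (ℓ - β) * K := by
      rw [hK, mul_add, mul_div_cancel₀ _ hgap.ne']
      exact le_add_of_nonneg_left (by positivity)
    have hcancel : ℓ * (q / ℓ) = q := mul_div_cancel₀ _ hℓ.ne'
    linarith [mul_le_mul_of_nonneg_right hgain (Real.exp_pos (-β * s)).le]
  · have : 0 ≤ p / (ℓ - β) + q / ℓ := by positivity
    simpa [hK, add_assoc] using this

theorem inner_neg_add_le {x v u : E} {ℓ g : ℝ} (hv : ℓ * ‖x‖ ^ 2 ≤ ⟪x, v⟫) (hu : ‖u‖ ≤ g) :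
    ⟪x, -v + u⟫ ≤ ‖x‖ * (g - ℓ * ‖x‖) := by
  have hxu : ⟪x, u⟫ ≤ ‖x‖ * g :=
    (real_inner_le_norm x u).trans (mul_le_mul_of_nonneg_left hu (norm_nonneg x))
  rw [inner_add_right, inner_neg_right]
  linarith

end Comparison

theorem tendsto_const_mul_exp_neg_mul_add (K R : ℝ) {β : ℝ} (hβ : 0 < β) :
    Tendsto (fun t => K * Real.exp (-β * t) + R) atTop (nhds R) := by
  have hexp : Tendsto (fun t => Real.exp (-β * t)) atTop (nhds 0) :=
    Real.tendsto_exp_comp_nhds_zero.2 (tendsto_id.const_mul_atTop_of_neg (neg_lt_zero.2 hβ))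
  simpa using (hexp.const_mul K).add_const R

/-- The paper's notion of exponential convergence to a bounded set: on `[0, ∞)` the signal `y`
approaches the closed ball of radius `R` about the origin at some exponential rate. The values of
`y` at negative times are ignored. -/
def ExpConvergesToBall {E : Type*} [Norm E] (y : ℝ → E) (R : ℝ) : Prop :=
  ∃ K β : ℝ, 0 ≤ K ∧ 0 < β ∧ ∀ t, 0 ≤ t → ‖y t‖ ≤ K * Real.exp (-β * t) + R

namespace ExpConvergesToBall

section Norm

variable {E : Type*} [Norm E] {y : ℝ → E} {R : ℝ}

theorem of_norm_le (hy : ∀ t, 0 ≤ t → ‖y t‖ ≤ R) : ExpConvergesToBall y R :=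
  ⟨0, 1, le_rfl, one_pos, by simpa using hy⟩

theorem exists_forall_rate_le (hy : ExpConvergesToBall y R) :
    ∃ K α : ℝ, 0 ≤ K ∧ 0 < α ∧
      ∀ β ≤ α, ∀ t, 0 ≤ t → ‖y t‖ ≤ K * Real.exp (-β * t) + R := by
  obtain ⟨K, α, hK, hα, hle⟩ := hy
  refine ⟨K, α, hK, hα, fun β hβ t ht => (hle t ht).trans ?_⟩
  gcongr

theorem exists_norm_le (hy : ExpConvergesToBall y R) : ∃ C, ∀ t, 0 ≤ t → ‖y t‖ ≤ C := by
  obtain ⟨K, α, -, hα, hle⟩ := hy.exists_forall_rate_le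
  exact ⟨K + R, fun t ht => by simpa using hle 0 hα.le t ht⟩

theorem limsup_norm_le (hy : ExpConvergesToBall y R) :
    limsup (fun t => (‖y t‖ : EReal)) atTop ≤ (R : EReal) := by
  obtain ⟨K, β, -, hβ, hle⟩ := hy
  rw [← (EReal.tendsto_coe.2 (tendsto_const_mul_exp_neg_mul_add K R hβ)).limsup_eq]
  refine limsup_le_limsup ?_
  filter_upwards [eventually_ge_atTop 0] with t ht
  exact EReal.coe_le_coe_iff.2 (hle t ht)

end Norm

theorem radius_nonneg {E : Type*} [SeminormedAddGroup E] {y : ℝ → E} {R : ℝ}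
    (hy : ExpConvergesToBall y R) : 0 ≤ R := by
  obtain ⟨K, β, -, hβ, hle⟩ := hy
  refine ge_of_tendsto (tendsto_const_mul_exp_neg_mul_add K R hβ) ?_
  filter_upwards [eventually_ge_atTop 0] with t ht
  exact (norm_nonneg _).trans (hle t ht)

theorem add {E : Type*} [SeminormedAddGroup E] {y₁ y₂ : ℝ → E} {R₁ R₂ : ℝ}
    (h₁ : ExpConvergesToBall y₁ R₁) (h₂ : ExpConvergesToBall y₂ R₂) :
    ExpConvergesToBall (fun t => y₁ t + y₂ t) (R₁ + R₂) := by
  obtain ⟨K₁, α₁, hK₁, hα₁, hle₁⟩ := h₁.exists_forall_rate_le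
  obtain ⟨K₂, α₂, hK₂, hα₂, hle₂⟩ := h₂.exists_forall_rate_le
  refine ⟨K₁ + K₂, min α₁ α₂, add_nonneg hK₁ hK₂, lt_min hα₁ hα₂, fun t ht => ?_⟩
  have h₁t := hle₁ (min α₁ α₂) (min_le_left _ _) t ht
  have h₂t := hle₂ (min α₁ α₂) (min_le_right _ _) t ht
  exact (norm_add_le_of_le h₁t h₂t).trans_eq (by ring)

theorem clm_apply {𝕜 E F : Type*} [NontriviallyNormedField 𝕜] [SeminormedAddCommGroup E]
    [NormedSpace 𝕜 E] [SeminormedAddCommGroup F] [NormedSpace 𝕜 F] {B : ℝ → F →L[𝕜] E}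
    {z : ℝ → F} {b r : ℝ} (hB : ∀ t, 0 ≤ t → ‖B t‖ ≤ b) (hz : ExpConvergesToBall z r) :
    ExpConvergesToBall (fun t => B t (z t)) (b * r) := by
  obtain ⟨K, β, hK, hβ, hle⟩ := hz
  have hb : 0 ≤ b := (norm_nonneg _).trans (hB 0 le_rfl)
  refine ⟨b * K, β, mul_nonneg hb hK, hβ, fun t ht => ?_⟩
  refine ((B t).le_of_opNorm_le_of_le (hB t ht) (hle t ht)).trans_eq ?_
  ring

open scoped RealInnerProductSpace in
theorem of_hasDerivWithinAt_neg_add {E : Type*} [NormedAddCommGroup E] [InnerProductSpace ℝ E]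
    {A : E → E} {ℓ q : ℝ} {u y : ℝ → E} (hℓ : 0 < ℓ) (hA : ∀ x, ℓ * ‖x‖ ^ 2 ≤ ⟪x, A x⟫)
    (hu : ExpConvergesToBall u q)
    (hy : ∀ t, 0 ≤ t → HasDerivWithinAt y (-A (y t) + u t) (Set.Ici 0) t) :
    ExpConvergesToBall y (q / ℓ) := by
  obtain ⟨p, α, hp, hα, hle⟩ := hu.exists_forall_rate_le
  obtain ⟨β, hβ, hβ'⟩ : ∃ β, 0 < β ∧ β < min α ℓ := exists_between (lt_min hα hℓ)
  obtain ⟨hβα, hβℓ⟩ := lt_min_iff.1 hβ'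
  have hK : 0 ≤ ‖y 0‖ + p / (ℓ - β) :=
    add_nonneg (norm_nonneg _) (div_nonneg hp (sub_nonneg.2 hβℓ.le))
  exact ⟨_, β, hK, hβ, fun t ht =>
    norm_le_exp_add_div_of_inner_deriv_le hℓ hβℓ hp hu.radius_nonneg hy
      (fun s hs => inner_neg_add_le (hA (y s)) (hle β hβα.le s hs)) ht⟩

end ExpConvergesToBall

open scoped RealInnerProductSpace in
theorem cascade_estimate_general {E F : Type*} [NormedAddCommGroup E] [InnerProductSpace ℝ E]
    [SeminormedAddCommGroup F] [NormedSpace ℝ F] {A : E → E} {ℓ : ℝ} (hℓ : 0 < ℓ)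
    (hA : ∀ x, ℓ * ‖x‖ ^ 2 ≤ ⟪x, A x⟫) {z : ℝ → F} {r : ℝ} (hz : ExpConvergesToBall z r)
    {B : ℝ → F →L[ℝ] E} {b : ℝ} (hB : ∀ t, 0 ≤ t → ‖B t‖ ≤ b)
    {w : ℝ → E} {W : ℝ} (hw : ExpConvergesToBall w W) {y : ℝ → E}
    (hy : ∀ t, 0 ≤ t → HasDerivWithinAt y (-A (y t) + B t (z t) + w t) (Set.Ici 0) t) :
    ExpConvergesToBall y ((b * r + W) / ℓ) :=
  .of_hasDerivWithinAt_neg_add hℓ hA ((hz.clm_apply hB).add hw) <| by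
    simpa only [add_assoc] using hy

/-- Cascade estimate used for the paper's Theorem 2: if
`y' = −L y + B(t) z(t) + w(t)` with `L` symmetric positive definite with
smallest eigenvalue `ℓ > 0`, `‖z(t)‖ ≤ c e^{−α t} + r`, `‖B(t)‖ ≤ b`
(operator norm, `B(t)` viewed as the linear map `ℝᵏ → ℝⁿ` of an `n × k`
matrix) and `‖w(t)‖ ≤ W`, then `y` is bounded on `[0,∞)` and
`limsup_{t→∞} ‖y(t)‖ ≤ (b r + W)/ℓ` (limsup taken in `EReal`). -/
theorem cascade_estimate
    {n k : ℕ} (L : Matrix (Fin n) (Fin n) ℝ)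
    (hLsymm : L.IsSymm) (hLpd : L.PosDef)
    (ℓ : ℝ) (hℓ : 0 < ℓ)
    (hmin : IsLeast (Set.range hLpd.isHermitian.eigenvalues) ℓ)
    (z : ℝ → EuclideanSpace ℝ (Fin k)) (hzc : Continuous z)
    (c α r : ℝ) (hc : 0 ≤ c) (hα : 0 < α) (hr : 0 ≤ r)
    (hz : ∀ t, 0 ≤ t → ‖z t‖ ≤ c * Real.exp (-α * t) + r)
    (B : ℝ → (EuclideanSpace ℝ (Fin k) →L[ℝ] EuclideanSpace ℝ (Fin n)))
    (hBc : Continuous B) (b : ℝ) (hB : ∀ t, ‖B t‖ ≤ b)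
    (w : ℝ → EuclideanSpace ℝ (Fin n)) (hwc : Continuous w)
    (W : ℝ) (hW : ∀ t, 0 ≤ t → ‖w t‖ ≤ W)
    (y : ℝ → EuclideanSpace ℝ (Fin n))
    (hy : ∀ t, 0 ≤ t →
      HasDerivAt y (-(Matrix.toEuclideanLin L (y t)) + B t (z t) + w t) t) :
    (∃ C, ∀ t, 0 ≤ t → ‖y t‖ ≤ C) ∧
      Filter.limsup (fun t => (‖y t‖ : EReal)) Filter.atTop ≤
        (((b * r + W) / ℓ : ℝ) : EReal) := by
  have h : ExpConvergesToBall y ((b * r + W) / ℓ) := cascade_estimate_general hℓ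
    (mul_norm_sq_le_re_inner_toEuclideanLin hLpd.isHermitian fun i => hmin.2 ⟨i, rfl⟩)
    ⟨c, α, hc, hα, hz⟩ (fun t _ => hB t) (.of_norm_le hW) fun t ht => (hy t ht).hasDerivWithinAt
  exact ⟨h.exists_norm_le, h.limsup_norm_le⟩
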